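/- arXiv:2202.12570 — 3 statements merged into one kernel-verified Lean document; each statement's English description precedes it below -/
import Mathlib

section
/- Affine relation from an invertible system of log-density equations (Step II of the identifiability proof): Let n be a positive integer, α a nonempty set, and 𝔅 a set. Let T, T′ : α → ℝⁿ, let η, η′ : 𝔅 → ℝⁿ, let a, a′ : 𝔅 → ℝ, and suppose there exist points B⁰, B¹, …, Bⁿ ∈ 𝔅 such that: (1) for every z ∈ α and every ℓ ∈ {0, 1, …, n}, ⟨T(z), η(Bˡ)⟩ + a(Bˡ) = ⟨T′(z), η′(Bˡ)⟩ + a′(Bˡ); and (2) the n × n matrix E whose ℓ-th column is η(Bˡ) − η(B⁰) (ℓ = 1, …, n) is invertible. Then there exist an n × n real matrix A and a vector c ∈ ℝⁿ such that T(z) = A · T′(z) + c for every z ∈ α. -/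
open scoped Matrix

section DifferenceMatrix

variable {R ι ι' κ 𝔅 : Type*}

/-- The matrix `E` of the identifiability argument, for the parameter map `η`, the base bag `b₀` and
the bags `b k`. The parameter differences are its columns, so sufficient statistics act on it as row
vectors. -/
def differenceMatrix [Sub R] (η : 𝔅 → ι → R) (b₀ : 𝔅) (b : κ → 𝔅) : Matrix ι κ R :=
  Matrix.of fun i k => η (b k) i - η b₀ i

variable [Fintype ι] [Fintype ι'] [NonUnitalNonAssocRing R]

theorem vecMul_differenceMatrix_apply (t : ι → R) (η : 𝔅 → ι → R) (b₀ : 𝔅) (b : κ → 𝔅) (k : κ) :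
    (t ᵥ* differenceMatrix η b₀ b) k = t ⬝ᵥ η (b k) - t ⬝ᵥ η b₀ :=
  dotProduct_sub t (η (b k)) (η b₀)

theorem vecMul_differenceMatrix_eq_add {t : ι → R} {t' : ι' → R} {η : 𝔅 → ι → R}
    {η' : 𝔅 → ι' → R} {a a' : 𝔅 → R} {b₀ : 𝔅} {b : κ → 𝔅}
    (h₀ : t ⬝ᵥ η b₀ + a b₀ = t' ⬝ᵥ η' b₀ + a' b₀)
    (h : ∀ k, t ⬝ᵥ η (b k) + a (b k) = t' ⬝ᵥ η' (b k) + a' (b k)) :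
    t ᵥ* differenceMatrix η b₀ b =
      t' ᵥ* differenceMatrix η' b₀ b + fun k => (a' - a) (b k) - (a' - a) b₀ := by
  funext k
  simp only [Pi.add_apply, Pi.sub_apply, vecMul_differenceMatrix_apply,
    eq_sub_of_add_eq h₀, eq_sub_of_add_eq (h k)]
  abel

end DifferenceMatrix

theorem eq_vecMul_mul_add_of_vecMul_eq_add {R ι ι' κ : Type*} [Semiring R] [Fintype ι] [Fintype ι']
    [Fintype κ] [DecidableEq ι] {E : Matrix ι κ R} {F : Matrix κ ι R} {E' : Matrix ι' κ R}
    {t : ι → R} {t' : ι' → R} {d : κ → R} (hEF : E * F = 1) (h : t ᵥ* E = t' ᵥ* E' + d) :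
    t = t' ᵥ* (E' * F) + d ᵥ* F :=
  calc
    t = (t ᵥ* E) ᵥ* F := by rw [Matrix.vecMul_vecMul, hEF, Matrix.vecMul_one]
    _ = t' ᵥ* (E' * F) + d ᵥ* F := by rw [h, Matrix.add_vecMul, Matrix.vecMul_vecMul]

theorem affine_relation_of_invertible_system_general {R ι ι' κ α 𝔅 : Type*} [Ring R] [Fintype ι]
    [Fintype ι'] [Fintype κ] [DecidableEq ι] {T : α → ι → R} {T' : α → ι' → R} {η : 𝔅 → ι → R}
    {η' : 𝔅 → ι' → R} {a a' : 𝔅 → R} {b₀ : 𝔅} {b : κ → 𝔅}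
    (h₀ : ∀ z, T z ⬝ᵥ η b₀ + a b₀ = T' z ⬝ᵥ η' b₀ + a' b₀)
    (h : ∀ z k, T z ⬝ᵥ η (b k) + a (b k) = T' z ⬝ᵥ η' (b k) + a' (b k))
    (hE : ∃ F : Matrix κ ι R, differenceMatrix η b₀ b * F = 1) :
    ∃ (A : Matrix ι' ι R) (c : ι → R), ∀ z, T z = T' z ᵥ* A + c := by
  obtain ⟨F, hEF⟩ := hE
  exact ⟨differenceMatrix η' b₀ b * F, _, fun z => eq_vecMul_mul_add_of_vecMul_eq_add hEF
    (vecMul_differenceMatrix_eq_add (h₀ z) (h z))⟩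

/-- **Affine relation from an invertible system of log-density equations**
(Step II of the identifiability proof).  If the log-density identities
`⟨T z, η Bˡ⟩ + a Bˡ = ⟨T' z, η' Bˡ⟩ + a' Bˡ` hold for all `z` and for `n + 1`
bags `B⁰, …, Bⁿ`, and the matrix of differences `η (Bˡ) - η (B⁰)` is
invertible, then `T` and `T'` are related by an affine transformation. -/
theorem affine_relation_of_invertible_system
    (n : ℕ) (hn : 0 < n) (α 𝔅 : Type*) [Nonempty α]
    (T T' : α → Fin n → ℝ) (η η' : 𝔅 → Fin n → ℝ) (a a' : 𝔅 → ℝ)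
    (B : Fin (n + 1) → 𝔅)
    (h1 : ∀ (z : α) (ℓ : Fin (n + 1)),
      (∑ i, T z i * η (B ℓ) i) + a (B ℓ) = (∑ i, T' z i * η' (B ℓ) i) + a' (B ℓ))
    (h2 : IsUnit (Matrix.of fun (i ℓ : Fin n) => η (B ℓ.succ) i - η (B 0) i)) :
    ∃ (A : Matrix (Fin n) (Fin n) ℝ) (c : Fin n → ℝ),
      ∀ z : α, T z = A.mulVec (T' z) + c := by
  obtain ⟨A, c, hA⟩ := affine_relation_of_invertible_system_general
    (b := fun ℓ => B (Fin.succ ℓ)) (h1 · 0) (fun z ℓ => h1 z ℓ.succ) h2.exists_right_inv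
  exact ⟨Aᵀ, c, fun z => by rw [Matrix.mulVec_transpose, hA z]⟩
end

section
/- Existence of points with linearly independent differences of sufficient statistics: Let n be a positive integer, α a nonempty set, and T : α → ℝⁿ. If the constant function 1 together with the n component functions T₁, …, Tₙ : α → ℝ are linearly independent in the real vector space of functions from α to ℝ, then there exist points z⁰, z¹, …, zⁿ ∈ α such that the n vectors T(z¹) − T(z⁰), …, T(zⁿ) − T(z⁰) are linearly independent in ℝⁿ. -/
/-!
An affine functional on `ℝⁿ` that vanishes on the image of `T` is a vanishing combination of
`1, T₁, …, Tₙ`, so it is zero. A proper affine subspace lies in the zero set of a nonzero affine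
functional, so the image of `T` affinely spans `ℝⁿ`. The differences from a base point therefore
span `ℝⁿ`, and a maximal linearly independent family of them is a basis.
-/

open Module

theorem affineSpan_eq_top_of_forall_affineMap_eq_zero {K V P : Type*} [DivisionRing K]
    [AddCommGroup V] [Module K V] [AddTorsor V P] {s : Set P}
    (hs : ∀ f : P →ᵃ[K] K, (∀ p ∈ s, f p = 0) → f = 0) : affineSpan K s = ⊤ := by
  have hs_nonempty : s.Nonempty := by
    by_contra! hs_empty
    obtain ⟨p⟩ : Nonempty P := inferInstance
    have hconst : AffineMap.const K P (1 : K) = 0 := hs _ (by simp [hs_empty])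
    exact one_ne_zero (congrArg (fun f : P →ᵃ[K] K => f p) hconst)
  obtain ⟨p₀, hp₀⟩ := hs_nonempty
  rw [AffineSubspace.affineSpan_eq_top_iff_vectorSpan_eq_top_of_nonempty K V P ⟨p₀, hp₀⟩]
  by_contra hproper
  obtain ⟨φ, hφ_ne, hφ⟩ := Submodule.exists_le_ker_of_lt_top _ (lt_top_iff_ne_top.mpr hproper)
  have hzero : φ.toAffineMap.comp (AffineEquiv.vaddConst K p₀).symm.toAffineMap = 0 :=
    hs _ fun p hp => hφ (vsub_mem_vectorSpan K hp hp₀)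
  exact hφ_ne (by simpa using congrArg AffineMap.linear hzero)

theorem exists_linearIndependent_comp_of_span_range_eq_top {K V ι α : Type*} [DivisionRing K]
    [AddCommGroup V] [Module K V] (b : Basis ι K V) {v : α → V}
    (hv : Submodule.span K (Set.range v) = ⊤) : ∃ z : ι → α, LinearIndependent K (v ∘ z) := by
  obtain ⟨κ, a, -, hspan, hli⟩ := exists_linearIndependent' K v
  let e : ι ≃ κ := b.indexEquiv (Basis.mk hli (hspan.trans hv).ge)
  exact ⟨a ∘ e, hli.comp e e.injective⟩

theorem affineMap_eq_zero_of_forall_affine_combination {R V ι α : Type*} [CommRing R]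
    [AddCommGroup V] [Module R V] [Fintype ι] (b : Basis ι R V) {T : α → V}
    (hT : ∀ (a₀ : R) (a : ι → R), (∀ z, a₀ + ∑ j, a j * b.repr (T z) j = 0) → a₀ = 0 ∧ a = 0)
    {f : V →ᵃ[R] R} (hf : ∀ z, f (T z) = 0) : f = 0 := by
  have hf_apply (v : V) : f v = f 0 + ∑ j, f.linear (b j) * b.repr v j :=
    calc
      f v = f 0 + f.linear v := (congrFun f.decomp v).trans (add_comm _ _)
      _ = f 0 + f.linear (∑ j, b.repr v j • b j) := by rw [b.sum_repr]
      _ = f 0 + ∑ j, f.linear (b j) * b.repr v j := by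
        simp only [map_sum, map_smul, smul_eq_mul, mul_comm]
  obtain ⟨hconst, hcoeff⟩ := hT _ _ fun z => (hf_apply (T z)).symm.trans (hf z)
  ext v
  simp [hf_apply v, hconst, fun j => congrFun hcoeff j]

theorem exists_points_linearIndependent_diff_general {K V P ι α : Type*} [DivisionRing K]
    [AddCommGroup V] [Module K V] [AddTorsor V P] (b : Basis ι K V) (T : α → P)
    (hT : ∀ f : P →ᵃ[K] K, (∀ z, f (T z) = 0) → f = 0) :
    ∃ (z₀ : α) (z : ι → α), LinearIndependent K fun ℓ => T (z ℓ) -ᵥ T z₀ := by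
  have hspan : affineSpan K (Set.range T) = ⊤ :=
    affineSpan_eq_top_of_forall_affineMap_eq_zero fun f hf => hT f (Set.forall_mem_range.mp hf)
  obtain ⟨_, z₀, rfl⟩ := AffineSubspace.nonempty_of_affineSpan_eq_top K V P hspan
  have hspan_diff : Submodule.span K (Set.range fun z => T z -ᵥ T z₀) = ⊤ := by
    rw [← vectorSpan_range_eq_span_range_vsub_right K T z₀]
    exact AffineSubspace.vectorSpan_eq_top_of_affineSpan_eq_top K V P hspan
  exact ⟨z₀, exists_linearIndependent_comp_of_span_range_eq_top b hspan_diff⟩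

/-- **Existence of points with linearly independent differences of sufficient
statistics.**  If the constant function `1` together with the component
functions `T₁, …, Tₙ : α → ℝ` are linearly independent, then there exist
points `z⁰, z¹, …, zⁿ ∈ α` such that the `n` vectors
`T (zˡ) - T (z⁰)`, `ℓ = 1, …, n`, are linearly independent in `ℝⁿ`. -/
theorem exists_points_linearIndependent_diff
    (n : ℕ) (hn : 0 < n) (α : Type*) [Nonempty α] (T : α → Fin n → ℝ)
    (hind : ∀ (a₀ : ℝ) (a : Fin n → ℝ),
      (∀ z : α, a₀ + ∑ j, a j * T z j = 0) → a₀ = 0 ∧ a = 0) :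
    ∃ z : Fin (n + 1) → α,
      LinearIndependent ℝ (fun ℓ : Fin n => T (z ℓ.succ) - T (z 0)) := by
  obtain ⟨z₀, z, hz⟩ := exists_points_linearIndependent_diff_general (Pi.basisFun ℝ (Fin n)) T
    fun _ => affineMap_eq_zero_of_forall_affine_combination (Pi.basisFun ℝ (Fin n)) hind
  exact ⟨Fin.cons z₀ z, hz⟩
end

section
/- Invertibility of the linear part of the affine relation (Step III of the identifiability proof): Let n be a positive integer, α a nonempty set, T, T′ : α → ℝⁿ, A an n × n real matrix, and c ∈ ℝⁿ, such that T(z) = A · T′(z) + c for every z ∈ α. If the constant function 1 together with the n component functions T₁, …, Tₙ : α → ℝ are linearly independent in the real vector space of functions from α to ℝ, then the matrix A is invertible. -/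
/-!
If `v` annihilates the rows of `A`, then `v ⬝ᵥ T z = v ⬝ᵥ (A *ᵥ T' z + c) = v ⬝ᵥ c` does not depend
on `z`, which is a linear relation between `1` and the components of `T`. Hence `v = 0`: the rows of
`A` are linearly independent, and a square matrix over a field, or over any left Artinian ring, with
linearly independent rows is invertible.
-/

open Matrix

section LinearlyIndependentRows

variable {m n R : Type*} [Fintype m]

lemma dotProduct_mulVec_add_of_vecMul_eq_zero [Fintype n] [NonUnitalSemiring R]
    {A : Matrix m n R} {v : m → R} (hv : v ᵥ* A = 0) (x : n → R) (c : m → R) :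
    v ⬝ᵥ (A *ᵥ x + c) = v ⬝ᵥ c := by
  rw [dotProduct_add, dotProduct_mulVec, hv, zero_dotProduct, zero_add]

lemma linearIndependent_row_of_affine_relation [Fintype n] [Ring R] {α : Type*}
    {T : α → m → R} {T' : α → n → R} {A : Matrix m n R} {c : m → R}
    (haff : ∀ z, T z = A *ᵥ T' z + c)
    (hconst : ∀ (b : R) (a : m → R), (∀ z, a ⬝ᵥ T z = b) → a = 0) :
    LinearIndependent R A.row := by
  rw [← vecMul_injective_iff, ← coe_vecMulLinear, injective_iff_map_eq_zero]
  intro v hv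
  refine hconst (v ⬝ᵥ c) v fun z ↦ ?_
  rw [haff z, dotProduct_mulVec_add_of_vecMul_eq_zero hv]

lemma isUnit_of_linearIndependent_row [DecidableEq m] [Ring R] [IsArtinianRing R]
    {A : Matrix m m R} (hA : LinearIndependent R A.row) : IsUnit A := by
  have hinj : Function.Injective A.vecMulLinear := vecMul_injective_iff.2 hA
  have hsurj : Function.Surjective A.vecMul :=
    (IsArtinian.bijective_of_injective_endomorphism A.vecMulLinear hinj).2
  obtain ⟨B, hBA⟩ := vecMul_surjective_iff_exists_left_inverse.1 hsurj
  exact .of_mul_eq_one_right B hBA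

theorem isUnit_of_affine_relation_general [DecidableEq m] [Ring R] [IsArtinianRing R] {α : Type*}
    {T T' : α → m → R} {A : Matrix m m R} {c : m → R}
    (haff : ∀ z, T z = A *ᵥ T' z + c)
    (hconst : ∀ (b : R) (a : m → R), (∀ z, a ⬝ᵥ T z = b) → a = 0) :
    IsUnit A :=
  isUnit_of_linearIndependent_row (linearIndependent_row_of_affine_relation haff hconst)

end LinearlyIndependentRows

/-- **Invertibility of the linear part of the affine relation**
(Step III of the identifiability proof).  If `T z = A · T' z + c` for every
`z`, and the constant function `1` together with the `n` component functions
`T₁, …, Tₙ` are linearly independent in the space of functions `α → ℝ`,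
then the matrix `A` is invertible. -/
theorem isUnit_of_affine_relation
    (n : ℕ) (hn : 0 < n) (α : Type*) [Nonempty α]
    (T T' : α → Fin n → ℝ) (A : Matrix (Fin n) (Fin n) ℝ) (c : Fin n → ℝ)
    (haff : ∀ z : α, T z = A.mulVec (T' z) + c)
    (hind : ∀ (a₀ : ℝ) (a : Fin n → ℝ),
      (∀ z : α, a₀ + ∑ j, a j * T z j = 0) → a₀ = 0 ∧ a = 0) :
    IsUnit A :=
  isUnit_of_affine_relation_general haff fun b a hb ↦
    (hind (-b) a fun z ↦ neg_add_eq_zero.2 (hb z).symm).2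
end
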